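/- arXiv:1509.02019 — 2 statements merged into one kernel-verified Lean document; each statement's English description precedes it below -/
import Mathlib

section
/- Let δ ∈ D be the multidiagonal of a copula on ℝ^d. If J(δ) = +∞, then H(C) = −∞ for every copula C with multidiagonal δ, i.e. max_{C ∈ C_δ} H(C) = −∞. -/
/-!
The theorem is proved in quantitative form. Let `C` be a copula with density `c`, let `U ∼ C`, fix
`p < q` and let `D(t) = δ_p(t) - δ_q(t) = P(U_(p) ≤ t < U_(q))`. Then
`E[-log D(U_(q))] ≤ 1 + ∫ (c log c)⁺ + d²`, so `J(δ) = ∞` forces `∫ (c log c)⁺ = ∞`, that is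
`H(C) = -∞` (`lintegral_abs_log_le`).

For the bound, put `h = 1 / max(D, ε)` and test `C` against
`φ = A - B` with `A(u) = log h(u_(q))` and `B(u) = ∫_{u_(p)}^{u_(q)} h`. The Fenchel–Young inequality
`c φ ≤ c log c + exp φ` (`mul_le_mul_log_add_exp`), integrated over the unit cube, gives
`E[A] ≤ E[B] + ∫ (c log c)⁺ + ∫ exp φ`. By Tonelli, `E[B] = ∫ h D ≤ 1`. Moreover
`exp φ(u) = h(t) exp(-∫_s^t h)` at `s = u_(p)`, `t = u_(q)`, which for fixed `s` is a subprobability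
density in `t` (`lintegral_hazard_le_one`); summing over which coordinates realize `u_(p)` and
`u_(q)` gives `∫ exp φ ≤ d²`. These bounds do not depend on `ε`
(`lintegral_neg_log_max_le`), and Fatou's lemma lets `ε` tend to `0`.
-/

/- Formalization framework for "Maximum entropy distribution of order statistics with given
marginals" (Butucea, Delmas, Dutfoy, Fischer).  One-dimensional cdfs are identified with
(probability) measures on `ℝ`, and cdfs on `ℝ^d` with measures on `Fin d → ℝ`. -/

open MeasureTheory Set
open scoped ENNReal

noncomputable section

namespace MaxEntOS

variable {d : ℕ}

/-- The cumulative distribution function of a measure on `ℝ`. -/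
def cdf1 (ν : Measure ℝ) (t : ℝ) : ℝ := (ν (Iic t)).toReal

/-- The cdf extended to `EReal` arguments (so that `cdfE ν ⊥ = 0` and `cdfE ν ⊤ = ν ℝ`). -/
def cdfE (ν : Measure ℝ) (x : EReal) : ℝ := (ν {s : ℝ | (s : EReal) ≤ x}).toReal

/-- The generalized inverse (quantile function) of the cdf of `ν`, real-valued. -/
def qReal (ν : Measure ℝ) (t : ℝ) : ℝ := sInf {s : ℝ | t ≤ cdf1 ν s}

/-- The generalized inverse of a nondecreasing function `g : ℝ → ℝ`, `EReal`-valued, with the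
conventions `inf ∅ = ⊤` and `inf ℝ = ⊥`. -/
def qInvE (g : ℝ → ℝ) (t : ℝ) : EReal := sInf ((fun s : ℝ => (s : EReal)) '' {s : ℝ | t ≤ g s})

open scoped Classical in
/-- The differential entropy (with respect to Lebesgue measure) of a measure, with values in
`EReal` : it equals `⊥` if the measure is not absolutely continuous, and otherwise it is
`−∫ f log f`, computed as the difference of the lower integrals of the negative and positive
parts of `f log f`, where `f` is the density. -/
def dEntropy {α : Type*} [MeasureSpace α] (μ : Measure α) : EReal :=
  if μ ≪ (volume : Measure α) then
    ((∫⁻ x, ENNReal.ofReal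
        (-((μ.rnDeriv volume x).toReal * Real.log ((μ.rnDeriv volume x).toReal))) : ℝ≥0∞) : EReal)
      - ((∫⁻ x, ENNReal.ofReal
        ((μ.rnDeriv volume x).toReal * Real.log ((μ.rnDeriv volume x).toReal)) : ℝ≥0∞) : EReal)
  else ⊥

/-- The nondecreasing rearrangement (order statistics) of a tuple. -/
def orderStat (x : Fin d → ℝ) : Fin d → ℝ := fun i => x (Tuple.sort x i)

/-- The `i`-th one-dimensional marginal of a measure on `ℝ^d`. -/
def marg (μ : Measure (Fin d → ℝ)) (i : Fin d) : Measure ℝ := μ.map fun x => x i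

/-- The multidiagonal of a measure on `ℝ^d` : the tuple of one-dimensional marginals of the
order statistics. -/
def multidiag (μ : Measure (Fin d → ℝ)) (i : Fin d) : Measure ℝ := μ.map fun x => orderStat x i

/-- The uniform distribution on `[0,1]`. -/
def uniform01 : Measure ℝ := (volume : Measure ℝ).restrict (Icc 0 1)

/-- A copula : a probability measure on `ℝ^d` whose one-dimensional marginals are all uniform
on `[0,1]`. -/
def IsCopula (μ : Measure (Fin d → ℝ)) : Prop :=
  IsProbabilityMeasure μ ∧ ∀ i, marg μ i = uniform01

/-- A measure on `ℝ^d` is symmetric (exchangeable) if it is invariant under permutations of the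
coordinates. -/
def IsSymmetric (μ : Measure (Fin d → ℝ)) : Prop :=
  ∀ π : Equiv.Perm (Fin d), μ.map (fun x => fun i => x (π i)) = μ

/-- `δ` belongs to `D` : it is the multidiagonal of some copula. -/
def IsMultidiag (δ : Fin d → Measure ℝ) : Prop :=
  ∃ μ : Measure (Fin d → ℝ), IsCopula μ ∧ multidiag μ = δ

/-- `δ` belongs to `D^0` : it is the multidiagonal of some absolutely continuous copula. -/
def IsMultidiag0 (δ : Fin d → Measure ℝ) : Prop :=
  ∃ μ : Measure (Fin d → ℝ), IsCopula μ ∧ μ ≪ (volume : Measure (Fin d → ℝ)) ∧ multidiag μ = δ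

/-- `F ∈ F_d` : `F` is a `d`-tuple of continuous one-dimensional cdfs (identified with atomless
probability measures on `ℝ`) which are stochastically ordered : `F (i-1) ≥ F i` pointwise. -/
structure IsMargOS [NeZero d] (F : Fin d → Measure ℝ) : Prop where
  prob : ∀ i, IsProbabilityMeasure (F i)
  cont : ∀ i, ∀ t : ℝ, F i {t} = 0
  ord : ∀ i : Fin d, i ≠ 0 → ∀ t : ℝ, cdf1 (F i) t ≤ cdf1 (F (i - 1)) t

/-- `μ ∈ L^OS_d(F)` : `μ` is the distribution of a `d`-dimensional order statistic (an almost
surely nondecreasing random vector) with one-dimensional marginals `F`. -/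
def IsCdfOS (F : Fin d → Measure ℝ) (μ : Measure (Fin d → ℝ)) : Prop :=
  IsProbabilityMeasure μ ∧ μ {x | Monotone x} = 1 ∧ ∀ i, marg μ i = F i

/-- `F ∈ F_d^0` : there exists an absolutely continuous distribution of order statistics with
one-dimensional marginals `F`. -/
def IsMargOS0 [NeZero d] (F : Fin d → Measure ℝ) : Prop :=
  IsMargOS F ∧ ∃ μ : Measure (Fin d → ℝ), IsCdfOS F μ ∧ μ ≪ (volume : Measure (Fin d → ℝ))

/-- The functional `J(F) = ∑_{i=2}^d ∫ |log (F_{i-1}(t) − F_i(t))| dF_i(t) ∈ [0,∞]`. -/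
def Jfun [NeZero d] (F : Fin d → Measure ℝ) : ℝ≥0∞ :=
  ∑ i : Fin d, if i = 0 then 0 else
    ∫⁻ t, ENNReal.ofReal |Real.log (cdf1 (F (i - 1)) t - cdf1 (F i) t)| ∂(F i)

/-- The copula of a measure on `ℝ^d` (for continuous marginals this is the unique copula
provided by Sklar's theorem) : the law of `(F_1(X_1), …, F_d(X_d))`. -/
def copulaOf (μ : Measure (Fin d → ℝ)) : Measure (Fin d → ℝ) :=
  μ.map fun x => fun i => cdf1 (marg μ i) (x i)

/-- The set `C^{OS}(F)` of copulas of distributions of order statistics with marginal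
cdfs `F`. -/
def copulaOS (F : Fin d → Measure ℝ) : Set (Measure (Fin d → ℝ)) :=
  {C | ∃ μ, IsCdfOS F μ ∧ copulaOf μ = C}

/-- The joint distribution with one-dimensional marginals `F` and copula `C` : the law of
`(F_1^{-1}(U_1), …, F_d^{-1}(U_d))` where `U ∼ C`. -/
def joinCopula (F : Fin d → Measure ℝ) (C : Measure (Fin d → ℝ)) : Measure (Fin d → ℝ) :=
  C.map fun u => fun i => qReal (F i) (u i)

/-- The law of `X_Π`, where `X ∼ μ` and `Π` is an independent uniform random permutation of
`{1, …, d}`. -/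
def symmetrize (μ : Measure (Fin d → ℝ)) : Measure (Fin d → ℝ) :=
  (d.factorial : ℝ≥0∞)⁻¹ • ∑ π : Equiv.Perm (Fin d), μ.map (fun x => fun i => x (π i))

/-- The symmetrizing operator `S_F` on copulas : `S_F(C)` is the copula of `X_Π` where `X` has
one-dimensional marginals `F` and copula `C`, and `Π` is an independent uniform random
permutation. -/
def SF (F : Fin d → Measure ℝ) (C : Measure (Fin d → ℝ)) : Measure (Fin d → ℝ) :=
  copulaOf (symmetrize (joinCopula F C))

/-- The average cdf `G = (1/d) ∑_{i=1}^d F_i`. -/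
def Gbar (F : Fin d → Measure ℝ) (t : ℝ) : ℝ := (∑ i, cdf1 (F i) t) / d

/-- `G` extended to `EReal` arguments (`GbarE F ⊥ = 0` and `GbarE F ⊤ = 1` for probability
measures). -/
def GbarE (F : Fin d → Measure ℝ) (x : EReal) : ℝ := (∑ i, cdfE (F i) x) / d

/-- The multidiagonal `δ^F` associated to the marginals `F`, as a tuple of measures : the law
of `G(X_i)` where `X_i ∼ F_i`, whose cdf is `F_i ∘ G^{-1}`. -/
def mdiagF (F : Fin d → Measure ℝ) (i : Fin d) : Measure ℝ := (F i).map (Gbar F)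

/-- `C` is a copula of the measure `ν` on `ℝ^d` : `C` is a copula and `ν` is the joint
distribution with the marginals of `ν` and copula `C`. -/
def IsCopulaOf (C ν : Measure (Fin d → ℝ)) : Prop :=
  IsCopula C ∧ ν = joinCopula (marg ν) C

/-- The extended tuple of multidiagonal cdfs, with the conventions `δ_(0) = 1` and
`δ_(d+1) = 0`; the natural index `i ∈ {1, …, d}` corresponds to `δ_(i)`. -/
def dcdf (δ : Fin d → Measure ℝ) (i : ℕ) (t : ℝ) : ℝ :=
  if h0 : i = 0 then 1
  else if h : i ≤ d then cdf1 (δ ⟨i - 1, by omega⟩) t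
  else 0

/-- The open set `Ψ^δ_i = {t ∈ (0,1) : δ_(i-1)(t) > δ_(i)(t)}`, for `1 ≤ i ≤ d+1`
(with the conventions `δ_(0) = 1` and `δ_(d+1) = 0`). -/
def Psi (δ : Fin d → Measure ℝ) (i : ℕ) : Set ℝ :=
  Ioo 0 1 ∩ {t | dcdf δ i t < dcdf δ (i - 1) t}

/-- Left endpoint of the connected component of `U` containing `t`. -/
def lend (U : Set ℝ) (t : ℝ) : ℝ := sSup {s | s ≤ t ∧ s ∉ U}

/-- Right endpoint of the connected component of `U` containing `t`. -/
def rend (U : Set ℝ) (t : ℝ) : ℝ := sInf {s | t ≤ s ∧ s ∉ U}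

/-- Midpoint `m_i^{(j)}` of the connected component of `U` containing `t`. -/
def midpt (U : Set ℝ) (t : ℝ) : ℝ := (lend U t + rend U t) / 2

/-- The integrand `δ'_(i)(s) / (δ_(i-1)(s) − δ_(i)(s))` (that is, `K'_i`). -/
def kInt (δ : Fin d → Measure ℝ) (i : ℕ) (s : ℝ) : ℝ :=
  deriv (dcdf δ i) s / (dcdf δ (i - 1) s - dcdf δ i s)

/-- `K_i(t)`, integrating `K'_i` from the midpoint of the connected component of `Ψ^δ_i`
containing `t` (note `K_{d+1} = 0` holds automatically, `δ_(d+1)` being constant). -/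
def Kfun (δ : Fin d → Measure ℝ) (i : ℕ) (t : ℝ) : ℝ :=
  ∫ s in (midpt (Psi δ i) t)..t, kInt δ i s

/-- The function `a_i(t) = K'_i(t) e^{K_{i+1}(t) − K_i(t)} 1_{Ψ^δ_i ∩ Ψ^δ_{i+1}}(t)`. -/
def aFun (δ : Fin d → Measure ℝ) (i : ℕ) : ℝ → ℝ :=
  (Psi δ i ∩ Psi δ (i + 1)).indicator fun t =>
    kInt δ i t * Real.exp (Kfun δ (i + 1) t - Kfun δ i t)

/-- The set `L_δ` of `u ∈ [0,1]^d` such that `(u_(i-1), u_(i)) ⊆ Ψ^δ_i` for all `2 ≤ i ≤ d`. -/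
def Lset [NeZero d] (δ : Fin d → Measure ℝ) : Set (Fin d → ℝ) :=
  {u | (∀ j, u j ∈ Icc (0 : ℝ) 1) ∧
    ∀ i : Fin d, i ≠ 0 → Ioo (orderStat u (i - 1)) (orderStat u i) ⊆ Psi δ (i.val + 1)}

/-- The density `c_δ(u) = (1/d!) 1_{L_δ}(u) ∏_{i=1}^d a_i(u_(i))` of the maximum entropy copula
with multidiagonal `δ`. -/
def cDelta [NeZero d] (δ : Fin d → Measure ℝ) : (Fin d → ℝ) → ℝ :=
  (Lset δ).indicator fun u =>
    (d.factorial : ℝ)⁻¹ * ∏ i : Fin d, aFun δ (i.val + 1) (orderStat u i)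

/-- The maximum entropy copula `C_δ` with multidiagonal `δ` : the measure with density `c_δ`. -/
def CDelta [NeZero d] (δ : Fin d → Measure ℝ) : Measure (Fin d → ℝ) :=
  (volume : Measure (Fin d → ℝ)).withDensity fun u => ENNReal.ofReal (cDelta δ u)

/-- The density of a one-dimensional measure `ν` with respect to Lebesgue measure. -/
def densOf (ν : Measure ℝ) (t : ℝ) : ℝ := (ν.rnDeriv volume t).toReal

/-- The function `ℓ_i(t) = f_i(t) / (F_{i-1}(t) − F_i(t))`. -/
def ellF [NeZero d] (F : Fin d → Measure ℝ) (i : Fin d) (t : ℝ) : ℝ :=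
  densOf (F i) t / (cdf1 (F (i - 1)) t - cdf1 (F i) t)

/-- The set `L^F` of ordered vectors `x ∈ ℝ^d` such that `F_{i-1}(t) > F_i(t)` for all
`t ∈ (x_{i-1}, x_i)` and all `2 ≤ i ≤ d`. -/
def LsetF [NeZero d] (F : Fin d → Measure ℝ) : Set (Fin d → ℝ) :=
  {x | Monotone x ∧ ∀ i : Fin d, i ≠ 0 →
    ∀ t ∈ Ioo (x (i - 1)) (x i), cdf1 (F i) t < cdf1 (F (i - 1)) t}

/-- The density `f_F` of the maximum entropy distribution of order statistics with marginal
cdfs `F` :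
`f_F(x) = f_1(x_1) ∏_{i=2}^d ℓ_i(x_i) exp(−∫_{x_{i-1}}^{x_i} ℓ_i(s) ds) 1_{L^F}(x)`. -/
def fF [NeZero d] (F : Fin d → Measure ℝ) : (Fin d → ℝ) → ℝ :=
  (LsetF F).indicator fun x =>
    densOf (F 0) (x 0) *
      ∏ i ∈ Finset.univ.erase (0 : Fin d),
        ellF F i (x i) * Real.exp (-∫ s in (x (i - 1))..(x i), ellF F i s)


/-! ### Order statistics and their cdfs -/

lemma measurable_orderStat (i : Fin d) : Measurable fun x : Fin d → ℝ => orderStat x i := by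
  have hset : ∀ σ : Equiv.Perm (Fin d), MeasurableSet {x : Fin d → ℝ | σ = Tuple.sort x} := by
    intro σ
    have heq : {x : Fin d → ℝ | σ = Tuple.sort x} =
        (⋂ (a) (b) (_ : a ≤ b), {x : Fin d → ℝ | x (σ a) ≤ x (σ b)}) ∩
        ⋂ (a) (b) (_ : a < b) (_ : ¬ σ a < σ b), {x : Fin d → ℝ | x (σ a) = x (σ b)}ᶜ := by
      ext x
      simp only [mem_ofPred_eq, Tuple.eq_sort_iff, Monotone, Function.comp, mem_inter_iff,
        mem_iInter, mem_compl_iff]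
      refine and_congr Iff.rfl ?_
      exact forall_congr' fun a => forall_congr' fun b => forall_congr' fun _ => not_imp_not.symm
    rw [heq]
    refine MeasurableSet.inter ?_ ?_
    · refine MeasurableSet.iInter fun a => MeasurableSet.iInter fun b =>
        MeasurableSet.iInter fun _ => ?_
      exact measurableSet_le (measurable_pi_apply _) (measurable_pi_apply _)
    · refine MeasurableSet.iInter fun a => MeasurableSet.iInter fun b =>
        MeasurableSet.iInter fun _ => MeasurableSet.iInter fun _ => ?_
      exact (measurableSet_eq_fun (measurable_pi_apply (σ a)) (measurable_pi_apply (σ b))).compl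
  intro s hs
  have : (fun x : Fin d → ℝ => orderStat x i) ⁻¹' s =
      ⋃ σ : Equiv.Perm (Fin d), {x | σ = Tuple.sort x} ∩ (fun x => x (σ i)) ⁻¹' s := by
    ext x
    simp [orderStat]
  rw [this]
  exact MeasurableSet.iUnion fun σ => (hset σ).inter (measurable_pi_apply _ hs)

lemma orderStat_mono (x : Fin d → ℝ) : Monotone (orderStat x) := Tuple.monotone_sort x

lemma sub_one_lt_self [NeZero d] (i : Fin d) (hi : i ≠ 0) : i - 1 < i := by
  cases d with
  | zero => exact i.elim0
  | succ n => exact Fin.sub_one_lt_iff.2 (Fin.pos_iff_ne_zero.2 hi)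

/-- The order statistics of a copula have densities bounded by `d`, so their cdfs are continuous. -/
lemma continuous_cdf1_multidiag {C : Measure (Fin d → ℝ)} (hC : IsCopula C) (i : Fin d) :
    Continuous (cdf1 (multidiag C i)) := by
  have := hC.1
  have hp : IsProbabilityMeasure (multidiag C i) :=
    Measure.isProbabilityMeasure_map (measurable_orderStat i).aemeasurable
  have hIoc : ∀ s t : ℝ, s ≤ t → (multidiag C i (Ioc s t)).toReal ≤ d * (t - s) := by
    intro s t hst
    have h1 : multidiag C i (Ioc s t) ≤ ENNReal.ofReal (d * (t - s)) := by
      calc multidiag C i (Ioc s t)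
          = C ((fun x => orderStat x i) ⁻¹' Ioc s t) :=
            Measure.map_apply (measurable_orderStat i) measurableSet_Ioc
        _ ≤ C (⋃ j : Fin d, (fun x => x j) ⁻¹' Ioc s t) := by
            refine measure_mono fun x hx => ?_
            exact mem_iUnion.2 ⟨Tuple.sort x i, hx⟩
        _ ≤ ∑ j : Fin d, C ((fun x => x j) ⁻¹' Ioc s t) := measure_iUnion_fintype_le _ _
        _ ≤ ∑ _j : Fin d, ENNReal.ofReal (t - s) := by
            refine Finset.sum_le_sum fun j _ => ?_
            rw [← Measure.map_apply (measurable_pi_apply j) measurableSet_Ioc]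
            have := hC.2 j
            unfold marg at this
            rw [this, uniform01]
            exact (Measure.restrict_apply_le _ _).trans (by simp)
        _ = ENNReal.ofReal (d * (t - s)) := by
            rw [ENNReal.ofReal_mul (by positivity)]
            simp
    exact (ENNReal.toReal_mono ENNReal.ofReal_ne_top h1).trans_eq
      (ENNReal.toReal_ofReal (mul_nonneg (by positivity) (by linarith)))
  refine (LipschitzWith.of_le_add_mul (d : NNReal) fun x y => ?_).continuous
  unfold cdf1
  rcases le_total x y with h | h
  · have : (multidiag C i (Iic x)).toReal ≤ (multidiag C i (Iic y)).toReal :=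
      ENNReal.toReal_mono (measure_ne_top _ _) (measure_mono (Iic_subset_Iic.2 h))
    have h2 : 0 ≤ ((d : NNReal) : ℝ) * dist x y := by positivity
    linarith
  · have h1 := measureReal_union_le (μ := multidiag C i) (Iic y) (Ioc y x)
    rw [Iic_union_Ioc_eq_Iic h] at h1
    have h2 := hIoc y x h
    rw [Real.dist_eq, abs_of_nonneg (by linarith)]
    simp only [measureReal_def] at h1
    simp only [NNReal.coe_natCast]
    linarith

/-! ### Hazard densities and the unit cube -/

/-- For a hazard rate `h ≥ 0`, the function `t ↦ h t * exp (-∫ r in s..t, h r)` is a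
subprobability density on `[s, ∞)`. -/
lemma lintegral_hazard_le_one {h : ℝ → ℝ} (hc : Continuous h) (h0 : ∀ t, 0 ≤ h t) (s : ℝ) :
    ∫⁻ t in Icc 0 1, (Ici s).indicator
      (fun t => ENNReal.ofReal (h t * Real.exp (-∫ r in s..t, h r))) t ≤ 1 := by
  set b := max s 1
  have hsb : s ≤ b := le_max_left _ _
  have hH : ∀ t, HasDerivAt (fun t => ∫ r in s..t, h r) (h t) t := fun t =>
    hc.integral_hasStrictDerivAt s t |>.hasDerivAt
  have hHc : Continuous fun t => ∫ r in s..t, h r :=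
    continuous_iff_continuousAt.2 fun t => (hH t).continuousAt
  have hgc : Continuous fun t => h t * Real.exp (-∫ r in s..t, h r) := by fun_prop
  have hFTC : ∫ t in s..b, h t * Real.exp (-∫ r in s..t, h r)
      = 1 - Real.exp (-∫ r in s..b, h r) := by
    rw [intervalIntegral.integral_eq_sub_of_hasDerivAt
      (f := fun t => -Real.exp (-∫ r in s..t, h r)) (fun t _ => ?_)
      (hgc.intervalIntegrable _ _)]
    · simp; ring
    · have hder := ((hH t).fun_neg.exp).fun_neg
      rwa [mul_neg, neg_neg, mul_comm] at hder
  rw [lintegral_indicator measurableSet_Ici, Measure.restrict_restrict measurableSet_Ici]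
  calc _ ≤ ∫⁻ t in Icc s b, ENNReal.ofReal (h t * Real.exp (-∫ r in s..t, h r)) := by
        refine lintegral_mono_set fun t ht => ⟨ht.1, ht.2.2.trans (le_max_right _ _)⟩
    _ = ∫⁻ t in Ioc s b, ENNReal.ofReal (h t * Real.exp (-∫ r in s..t, h r)) := by
        rw [restrict_Ioc_eq_restrict_Icc]
    _ = ENNReal.ofReal (∫ t in s..b, h t * Real.exp (-∫ r in s..t, h r)) := by
        rw [intervalIntegral.integral_of_le hsb, ofReal_integral_eq_lintegral_ofReal]
        · exact hgc.integrableOn_Ioc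
        · exact Filter.Eventually.of_forall fun t => mul_nonneg (h0 t) (Real.exp_pos _).le
    _ ≤ 1 := by
        rw [hFTC]
        exact ENNReal.ofReal_le_one.2 (by linarith [Real.exp_pos (-∫ r in s..b, h r)])

/-- The unit cube of `ℝ^d`. -/
def unitCube (d : ℕ) : Set (Fin d → ℝ) := Set.univ.pi fun _ => Icc 0 1

lemma measurableSet_unitCube : MeasurableSet (unitCube d) :=
  MeasurableSet.univ_pi fun _ => measurableSet_Icc

lemma isProbabilityMeasure_uniform01 : IsProbabilityMeasure uniform01 :=
  ⟨by simp [uniform01]⟩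

lemma ae_mem_unitCube {C : Measure (Fin d → ℝ)} (hC : IsCopula C) : ∀ᵐ u ∂C, u ∈ unitCube d := by
  have : ∀ j : Fin d, ∀ᵐ u ∂C, u j ∈ Icc (0 : ℝ) 1 := by
    intro j
    have h := hC.2 j
    unfold marg at h
    have h2 : ∀ᵐ t ∂(C.map fun x => x j), t ∈ Icc (0 : ℝ) 1 := by
      rw [h, uniform01]
      exact ae_restrict_mem measurableSet_Icc
    exact ae_of_ae_map (measurable_pi_apply j).aemeasurable h2
  filter_upwards [ae_all_iff.2 this] with u hu j _ using hu j

/-- Distinct coordinates on the unit cube are independent and uniform. -/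
lemma lintegral_unitCube_pair {j k : Fin d} (hjk : j ≠ k) {g : ℝ × ℝ → ℝ≥0∞} (hg : Measurable g) :
    ∫⁻ u in unitCube d, g (u j, u k) = ∫⁻ s in Icc 0 1, ∫⁻ t in Icc 0 1, g (s, t) := by
  have hprob := isProbabilityMeasure_uniform01
  have hvol : (volume : Measure (Fin d → ℝ)).restrict (unitCube d)
      = Measure.pi fun _ => uniform01 := by
    rw [volume_pi, unitCube, Measure.restrict_pi_pi]; rfl
  have hind := (ProbabilityTheory.iIndepFun_pi (μ := fun _ : Fin d => uniform01)
    (X := fun _ t => t) (fun _ => aemeasurable_id)).indepFun hjk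
  have hmap := hind.map_prod_eq_prod_map_map
    (measurable_pi_apply j).aemeasurable (measurable_pi_apply k).aemeasurable
  have hev : ∀ l : Fin d, (Measure.pi fun _ : Fin d => uniform01).map (fun u => u l) = uniform01 :=
    fun l => (measurePreserving_eval (fun _ : Fin d => uniform01) l).map_eq
  rw [hvol, ← lintegral_map (f := g) hg (g := fun u : Fin d → ℝ => (u j, u k)) (by fun_prop), hmap,
    hev, hev, lintegral_prod _ hg.aemeasurable]
  rfl

/-! ### The entropy estimate -/

/-- A weakened Fenchel–Young inequality: `exp` is the conjugate of `x log x - x`, and the term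
`-x ≤ 0` is dropped. -/
lemma mul_le_mul_log_add_exp {x : ℝ} (hx : 0 ≤ x) (y : ℝ) :
    x * y ≤ x * Real.log x + Real.exp y := by
  rcases hx.eq_or_lt with rfl | hx
  · simp [(Real.exp_pos y).le]
  · have h := Real.add_one_le_exp (y - Real.log x)
    rw [Real.exp_sub, Real.exp_log hx, le_div_iff₀ hx] at h
    nlinarith

/-- The previous inequality at `y = a - b`, with `x * b` moved to the right so that every term lies
in `ℝ≥0∞` and no integrability question arises. -/
lemma mul_le_add_mul_log_add_exp {x : ℝ≥0∞} (hx : x ≠ ∞) (a b : ℝ) :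
    x * ENNReal.ofReal a ≤ x * ENNReal.ofReal b
      + ENNReal.ofReal (x.toReal * Real.log x.toReal) + ENNReal.ofReal (Real.exp (a - b)) := by
  have h := mul_le_mul_log_add_exp (ENNReal.toReal_nonneg (a := x)) (a - b)
  obtain ⟨y, hy, rfl⟩ : ∃ y : ℝ, 0 ≤ y ∧ x = ENNReal.ofReal y :=
    ⟨x.toReal, ENNReal.toReal_nonneg, (ENNReal.ofReal_toReal hx).symm⟩
  rw [ENNReal.toReal_ofReal hy] at *
  rw [← ENNReal.ofReal_mul hy, ← ENNReal.ofReal_mul hy]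
  calc ENNReal.ofReal (y * a)
      ≤ ENNReal.ofReal (y * b + y * Real.log y + Real.exp (a - b)) :=
        ENNReal.ofReal_le_ofReal (by nlinarith)
    _ ≤ _ := ENNReal.ofReal_add_le.trans (add_le_add_left ENNReal.ofReal_add_le _)

/-- For `p < q`, the difference of the cdfs of `U_(p)` and `U_(q)` at `t` is the probability that
`t` separates them. -/
lemma cdf1_sub_eq {C : Measure (Fin d → ℝ)} [IsProbabilityMeasure C] {p q : Fin d} (hpq : p < q)
    (t : ℝ) : cdf1 (multidiag C p) t - cdf1 (multidiag C q) t =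
      (C {u | orderStat u p ≤ t ∧ t < orderStat u q}).toReal := by
  unfold cdf1 multidiag
  rw [Measure.map_apply (measurable_orderStat p) measurableSet_Iic,
    Measure.map_apply (measurable_orderStat q) measurableSet_Iic]
  have hsub : (fun x : Fin d → ℝ => orderStat x q) ⁻¹' Iic t ⊆ (fun x => orderStat x p) ⁻¹' Iic t :=
    fun x hx => (orderStat_mono x hpq.le).trans hx
  have h := measureReal_sdiff (μ := C) hsub (measurable_orderStat q measurableSet_Iic)
  simp only [measureReal_def] at h
  rw [← h]
  congr 2
  ext u
  simp

/-- The basic estimate at truncation level `ε`; the bound does not depend on `ε`. -/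
lemma lintegral_neg_log_max_le {C : Measure (Fin d → ℝ)} (hC : IsCopula C)
    (hac : C ≪ (volume : Measure (Fin d → ℝ))) {p q : Fin d} (hpq : p < q) {ε : ℝ}
    (hε : 0 < ε) :
    ∫⁻ t, ENNReal.ofReal
        (-Real.log (max (cdf1 (multidiag C p) t - cdf1 (multidiag C q) t) ε)) ∂(multidiag C q)
      ≤ 1 + (∫⁻ x, ENNReal.ofReal
          ((C.rnDeriv volume x).toReal * Real.log ((C.rnDeriv volume x).toReal)))
        + (d * d : ℕ) := by
  have hprob := hC.1
  set D : ℝ → ℝ := fun t => cdf1 (multidiag C p) t - cdf1 (multidiag C q) t with hD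
  have hDc : Continuous D :=
    (continuous_cdf1_multidiag hC p).sub (continuous_cdf1_multidiag hC q)
  have hDeq : ∀ t, D t = (C {u | orderStat u p ≤ t ∧ t < orderStat u q}).toReal :=
    cdf1_sub_eq hpq
  set h : ℝ → ℝ := fun t => (max (D t) ε)⁻¹ with hh
  have hpos : ∀ t, 0 < max (D t) ε := fun t => lt_max_of_lt_right hε
  have hhpos : ∀ t, 0 < h t := fun t => inv_pos.2 (hpos t)
  have hhc : Continuous h := (hDc.max continuous_const).inv₀ fun t => (hpos t).ne'
  set H : ℝ → ℝ := fun t => ∫ r in (0 : ℝ)..t, h r with hHdef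
  have hHc : Continuous H := continuous_iff_continuousAt.2 fun t =>
    (hhc.integral_hasStrictDerivAt 0 t).hasDerivAt.continuousAt
  have hHsub : ∀ s t, ∫ r in s..t, h r = H t - H s := fun s t =>
    (intervalIntegral.integral_interval_sub_left (hhc.intervalIntegrable _ _)
      (hhc.intervalIntegrable _ _)).symm
  have hmp := measurable_orderStat p
  have hmq := measurable_orderStat q
  have hle : ∀ u : Fin d → ℝ, orderStat u p ≤ orderStat u q := fun u => orderStat_mono u hpq.le
  set A : (Fin d → ℝ) → ℝ := fun u => Real.log (h (orderStat u q)) with hA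
  set B : (Fin d → ℝ) → ℝ := fun u => H (orderStat u q) - H (orderStat u p) with hB
  have hlogm : Measurable fun t => Real.log (h t) := Real.measurable_log.comp hhc.measurable
  have hAm : Measurable A := hlogm.comp hmq
  have hBm : Measurable B := (hHc.measurable.comp hmq).sub (hHc.measurable.comp hmp)
  -- The expected hazard accumulated between `U_(p)` and `U_(q)` is `∫ h * D ≤ 1`.
  have hEB : ∫⁻ u in unitCube d, ENNReal.ofReal (B u) ∂C ≤ 1 := by
    have hset : MeasurableSet {z : (Fin d → ℝ) × ℝ | orderStat z.1 p ≤ z.2 ∧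
        z.2 < orderStat z.1 q} :=
      (measurableSet_le (hmp.comp measurable_fst) measurable_snd).inter
        (measurableSet_lt measurable_snd (hmq.comp measurable_fst))
    calc ∫⁻ u in unitCube d, ENNReal.ofReal (B u) ∂C
        ≤ ∫⁻ u in unitCube d, (∫⁻ t in Icc 0 1,
          {z : (Fin d → ℝ) × ℝ | orderStat z.1 p ≤ z.2 ∧ z.2 < orderStat z.1 q}.indicator
            (fun z => ENNReal.ofReal (h z.2)) (u, t)) ∂C := by
          refine setLIntegral_mono' measurableSet_unitCube fun u hu => ?_
          have hset' : MeasurableSet (Ico (orderStat u p) (orderStat u q)) := measurableSet_Ico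
          have : ∀ t, {z : (Fin d → ℝ) × ℝ | orderStat z.1 p ≤ z.2 ∧
              z.2 < orderStat z.1 q}.indicator (fun z => ENNReal.ofReal (h z.2)) (u, t)
              = (Ico (orderStat u p) (orderStat u q)).indicator
                (fun t => ENNReal.ofReal (h t)) t := fun t => rfl
          simp_rw [this]
          rw [lintegral_indicator hset', Measure.restrict_restrict hset',
            inter_eq_left.2, restrict_Ico_eq_restrict_Ioc,
            ← ofReal_integral_eq_lintegral_ofReal, ← intervalIntegral.integral_of_le (hle u), hHsub]
          · exact hhc.integrableOn_Ioc
          · exact Filter.Eventually.of_forall fun t => (hhpos t).le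
          · exact fun t ht => ⟨(hu (Tuple.sort u p) trivial).1.trans ht.1,
              ht.2.le.trans (hu (Tuple.sort u q) trivial).2⟩
      _ ≤ ∫⁻ u, (∫⁻ t in Icc 0 1,
          {z : (Fin d → ℝ) × ℝ | orderStat z.1 p ≤ z.2 ∧ z.2 < orderStat z.1 q}.indicator
            (fun z => ENNReal.ofReal (h z.2)) (u, t)) ∂C := setLIntegral_le_lintegral _ _
      _ = ∫⁻ t in Icc 0 1, ∫⁻ u,
          {z : (Fin d → ℝ) × ℝ | orderStat z.1 p ≤ z.2 ∧ z.2 < orderStat z.1 q}.indicator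
            (fun z => ENNReal.ofReal (h z.2)) (u, t) ∂C := by
          rw [lintegral_lintegral_swap]
          exact ((ENNReal.measurable_ofReal.comp
            (hhc.measurable.comp measurable_snd)).indicator hset).aemeasurable
      _ ≤ ∫⁻ _t in Icc (0 : ℝ) 1, 1 := by
          refine lintegral_mono fun t => ?_
          have hset' : MeasurableSet {u : Fin d → ℝ | orderStat u p ≤ t ∧ t < orderStat u q} :=
            (measurableSet_le hmp measurable_const).inter (measurableSet_lt measurable_const hmq)
          have : ∀ u, {z : (Fin d → ℝ) × ℝ | orderStat z.1 p ≤ z.2 ∧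
              z.2 < orderStat z.1 q}.indicator (fun z => ENNReal.ofReal (h z.2)) (u, t)
              = {u : Fin d → ℝ | orderStat u p ≤ t ∧ t < orderStat u q}.indicator
                (fun _ => ENNReal.ofReal (h t)) u := fun t => rfl
          simp_rw [this]
          rw [lintegral_indicator_const hset', ← ENNReal.ofReal_toReal (measure_ne_top C _),
            ← hDeq, ← ENNReal.ofReal_mul (hhpos t).le]
          refine ENNReal.ofReal_le_one.2 ?_
          simp only [hh]
          rw [inv_mul_le_iff₀ (hpos t), mul_one]
          exact le_max_left _ _
      _ = 1 := by simp
  -- `exp (A - B)` is at most a sum, over pairs of distinct coordinates, of conditional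
  -- subdensities with hazard rate `h`.
  have hexp : ∫⁻ u in unitCube d, ENNReal.ofReal (Real.exp (A u - B u)) ≤ (d * d : ℕ) := by
    set g : ℝ × ℝ → ℝ≥0∞ := {z : ℝ × ℝ | z.1 ≤ z.2}.indicator
      (fun z => ENNReal.ofReal (h z.2 * Real.exp (-(H z.2 - H z.1)))) with hg
    have hgm : Measurable g := by
      refine Measurable.indicator ?_ (measurableSet_le measurable_fst measurable_snd)
      refine (Continuous.measurable ?_).ennreal_ofReal
      fun_prop
    calc ∫⁻ u in unitCube d, ENNReal.ofReal (Real.exp (A u - B u))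
        ≤ ∫⁻ u in unitCube d, ∑ jk : Fin d × Fin d, if jk.1 = jk.2 then 0
            else g (u jk.1, u jk.2) := by
          refine lintegral_mono fun u => ?_
          have hne : Tuple.sort u p ≠ Tuple.sort u q := fun e =>
            hpq.ne ((Tuple.sort u).injective e)
          refine le_trans (le_of_eq ?_) (Finset.single_le_sum (fun _ _ => zero_le)
            (Finset.mem_univ (Tuple.sort u p, Tuple.sort u q)))
          have hmem : (u (Tuple.sort u p), u (Tuple.sort u q)) ∈ {z : ℝ × ℝ | z.1 ≤ z.2} := hle u
          simp only [hne, if_false, hg]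
          rw [indicator_of_mem hmem]
          simp only [hA, hB, sub_eq_add_neg, Real.exp_add]
          rw [Real.exp_log (hhpos _)]
          rfl
      _ = ∑ jk : Fin d × Fin d, ∫⁻ u in unitCube d, if jk.1 = jk.2 then 0
            else g (u jk.1, u jk.2) := by
          refine lintegral_finsetSum _ fun jk _ => ?_
          by_cases e : jk.1 = jk.2
          · simp [e]
          · simp only [e, if_false]
            exact hgm.comp (by fun_prop)
      _ ≤ ∑ _jk : Fin d × Fin d, 1 := by
          refine Finset.sum_le_sum fun jk _ => ?_
          by_cases e : jk.1 = jk.2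
          · simp [e]
          · simp only [e, if_false]
            rw [lintegral_unitCube_pair e hgm]
            calc _ ≤ ∫⁻ _s in Icc (0 : ℝ) 1, 1 := by
                  refine lintegral_mono fun s => ?_
                  have := lintegral_hazard_le_one hhc (fun t => (hhpos t).le) s
                  simp_rw [hHsub] at this
                  exact this
              _ = 1 := by simp
      _ = (d * d : ℕ) := by simp
  have hneg : ∀ t, -Real.log (max (D t) ε) = Real.log (h t) := fun t => (Real.log_inv _).symm
  have hCeq : C.restrict (unitCube d) = C := Measure.restrict_eq_self_of_ae_mem (ae_mem_unitCube hC)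
  calc ∫⁻ t, ENNReal.ofReal (-Real.log (max (D t) ε)) ∂(multidiag C q)
      = ∫⁻ u in unitCube d, ENNReal.ofReal (A u) ∂C := by
        simp_rw [hneg]
        rw [multidiag, lintegral_map hlogm.ennreal_ofReal hmq, hCeq]
    _ = ∫⁻ u in unitCube d, C.rnDeriv volume u * ENNReal.ofReal (A u) :=
        (setLIntegral_rnDeriv_mul hac hAm.ennreal_ofReal.aemeasurable measurableSet_unitCube).symm
    _ ≤ ∫⁻ u in unitCube d, (C.rnDeriv volume u * ENNReal.ofReal (B u)
          + ENNReal.ofReal ((C.rnDeriv volume u).toReal * Real.log ((C.rnDeriv volume u).toReal))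
          + ENNReal.ofReal (Real.exp (A u - B u))) := by
        refine lintegral_mono_ae ?_
        filter_upwards [ae_restrict_of_ae (Measure.rnDeriv_lt_top C volume)] with u hu
        exact mul_le_add_mul_log_add_exp hu.ne _ _
    _ = (∫⁻ u in unitCube d, C.rnDeriv volume u * ENNReal.ofReal (B u))
        + (∫⁻ u in unitCube d,
          ENNReal.ofReal ((C.rnDeriv volume u).toReal * Real.log ((C.rnDeriv volume u).toReal)))
        + ∫⁻ u in unitCube d, ENNReal.ofReal (Real.exp (A u - B u)) := by
        rw [lintegral_add_right _ (hAm.fun_sub hBm).exp.ennreal_ofReal,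
          lintegral_add_left ((Measure.measurable_rnDeriv _ _).fun_mul hBm.ennreal_ofReal)]
    _ ≤ _ := by
        refine add_le_add (add_le_add ?_ (setLIntegral_le_lintegral _ _)) hexp
        rw [setLIntegral_rnDeriv_mul hac hBm.ennreal_ofReal.aemeasurable measurableSet_unitCube]
        exact hEB

/-- Fatou's lemma removes the truncation. Where the two cdfs agree, `Real.log 0 = 0` makes the
integrand vanish, which only helps. -/
lemma lintegral_abs_log_le {C : Measure (Fin d → ℝ)} (hC : IsCopula C)
    (hac : C ≪ (volume : Measure (Fin d → ℝ))) {p q : Fin d} (hpq : p < q) :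
    ∫⁻ t, ENNReal.ofReal
        |Real.log (cdf1 (multidiag C p) t - cdf1 (multidiag C q) t)| ∂(multidiag C q)
      ≤ 1 + (∫⁻ x, ENNReal.ofReal
          ((C.rnDeriv volume x).toReal * Real.log ((C.rnDeriv volume x).toReal)))
        + (d * d : ℕ) := by
  have hprob := hC.1
  have hDc : Continuous fun t => cdf1 (multidiag C p) t - cdf1 (multidiag C q) t :=
    (continuous_cdf1_multidiag hC p).sub (continuous_cdf1_multidiag hC q)
  calc _ ≤ ∫⁻ t, Filter.liminf (fun n : ℕ => ENNReal.ofReal (-Real.log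
          (max (cdf1 (multidiag C p) t - cdf1 (multidiag C q) t) (1 / ((n : ℝ) + 1)))))
          Filter.atTop ∂(multidiag C q) := by
        refine lintegral_mono fun t => ?_
        have h0 : 0 ≤ cdf1 (multidiag C p) t - cdf1 (multidiag C q) t := by
          rw [cdf1_sub_eq hpq]; exact ENNReal.toReal_nonneg
        have h1 : cdf1 (multidiag C p) t - cdf1 (multidiag C q) t ≤ 1 := by
          rw [cdf1_sub_eq hpq]; exact measureReal_le_one
        rcases h0.eq_or_lt with h | h
        · simp [← h]
        · refine Filter.le_liminf_of_le (by isBoundedDefault) ?_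
          have hev := (tendsto_one_div_add_atTop_nhds_zero_nat (𝕜 := ℝ)).eventually_lt_const h
          filter_upwards [hev] with n hn
          rw [max_eq_left hn.le, abs_of_nonpos (Real.log_nonpos h0 h1)]
    _ ≤ Filter.liminf (fun n : ℕ => ∫⁻ t, ENNReal.ofReal (-Real.log
          (max (cdf1 (multidiag C p) t - cdf1 (multidiag C q) t) (1 / ((n : ℝ) + 1))))
          ∂(multidiag C q)) Filter.atTop := by
        refine lintegral_liminf_le fun n => Measurable.ennreal_ofReal ?_
        exact (Real.measurable_log.comp (hDc.max continuous_const).measurable).neg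
    _ ≤ _ := by
        refine Filter.liminf_le_of_le (by isBoundedDefault) fun b hb => ?_
        obtain ⟨n, hn⟩ := hb.exists
        exact hn.trans (lintegral_neg_log_max_le hC hac hpq (by positivity))

/-- Theorem `theo:spec`, case (a).  Let `δ ∈ D` be the multidiagonal of a
copula on `ℝ^d`.  If `J(δ) = +∞`, then `H(C) = −∞` for every copula `C` with multidiagonal
`δ`, i.e. `max_{C ∈ C_δ} H(C) = −∞`. -/
theorem stmt_3 {d : ℕ} [NeZero d] (δ : Fin d → Measure ℝ) (hδ : IsMultidiag δ)
    (hJ : Jfun δ = ∞) :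
    ∀ C : Measure (Fin d → ℝ), IsCopula C → multidiag C = δ → dEntropy C = ⊥ := by
  intro C hC hCδ
  unfold dEntropy
  split_ifs with hac
  · have htop : ∫⁻ x, ENNReal.ofReal
        ((C.rnDeriv volume x).toReal * Real.log ((C.rnDeriv volume x).toReal)) = ∞ := by
      by_contra hfin
      refine absurd hJ (ne_of_lt ?_)
      rw [Jfun, ENNReal.sum_lt_top]
      intro i _
      split_ifs with hi
      · simp
      · rw [← hCδ]
        refine (lintegral_abs_log_le hC hac (sub_one_lt_self i hi)).trans_lt ?_
        exact ENNReal.add_lt_top.2 ⟨ENNReal.add_lt_top.2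
          ⟨ENNReal.one_lt_top, lt_top_iff_ne_top.2 hfin⟩, ENNReal.natCast_lt_top _⟩
    rw [htop, EReal.coe_ennreal_top]
    exact EReal.sub_top _
  · rfl

end MaxEntOS
end
end

section
/- Let 𝐅 = (F_1,…,F_d) be a d-tuple of continuous cdfs on ℝ with F_{i-1} ≥ F_i pointwise for all 2 ≤ i ≤ d. The symmetrizing operator S_𝐅 is a bijection from C^OS(𝐅) onto its image C^sym(𝐅) = S_𝐅(C^OS(𝐅)). -/
/-!
The copula of a law `ν` on `ℝ^d` together with the marginals of `ν` determines `ν`: for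
`X ∼ ν_i` with cdf `F_i`, `F_i^{-1}(F_i(X)) = X` almost surely (`ae_qReal_cdf1`), since the
exceptional points lie in `{F_i = 0}` or in countably many flat pieces of `F_i`, all of which are
null. Hence `joinCopula (marg ν) (copulaOf ν) = ν` (`joinCopula_copulaOf`).

If `C` is the copula of an ordered law `μ` with marginals `F`, this gives `joinCopula F C = μ`, so
that `S_F(C)` is the copula of `symmetrize μ`. The marginals of `symmetrize μ` depend on `F` only
(`marg_symmetrize`), so a second use of the same fact recovers `symmetrize μ` from `S_F(C)`.

Finally an ordered law is recovered from its symmetrization: a permutation-invariant set has the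
same mass under `μ` and `symmetrize μ`, and every measurable set `B` of monotone vectors is the
trace on the monotone vectors of the invariant set `⋃ π, {x | x ∘ π ∈ B}`, because two monotone
rearrangements of a vector coincide (`eq_of_symmetrize_eq`).
-/

/- Formalization framework for "Maximum entropy distribution of order statistics with given
marginals" (Butucea, Delmas, Dutfoy, Fischer).  One-dimensional cdfs are identified with
(probability) measures on `ℝ`, and cdfs on `ℝ^d` with measures on `Fin d → ℝ`. -/

open MeasureTheory Set
open scoped ENNReal

noncomputable section

namespace MaxEntOS

variable {d : ℕ}

lemma cdf1_eq_cdf (ν : Measure ℝ) [IsProbabilityMeasure ν] : cdf1 ν = ProbabilityTheory.cdf ν := by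
  funext t
  rw [ProbabilityTheory.cdf_eq_real]
  rfl

lemma monotone_cdf1 (ν : Measure ℝ) [IsProbabilityMeasure ν] : Monotone (cdf1 ν) := by
  rw [cdf1_eq_cdf]
  exact ProbabilityTheory.monotone_cdf ν

lemma bddBelow_superlevel (ν : Measure ℝ) [IsProbabilityMeasure ν] {t : ℝ} (ht : 0 < t) :
    BddBelow {s : ℝ | t ≤ cdf1 ν s} := by
  have h := (ProbabilityTheory.tendsto_cdf_atBot ν).eventually_lt_const ht
  obtain ⟨a, ha⟩ := h.exists
  refine ⟨a, fun s hs => ?_⟩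
  by_contra! hlt
  have h1 := monotone_cdf1 ν hlt.le
  rw [← cdf1_eq_cdf] at ha
  exact absurd (hs.trans h1) (not_le.2 ha)

lemma nonempty_superlevel (ν : Measure ℝ) [IsProbabilityMeasure ν] {t : ℝ} (ht : t < 1) :
    {s : ℝ | t ≤ cdf1 ν s}.Nonempty := by
  have h := (ProbabilityTheory.tendsto_cdf_atTop ν).eventually_const_lt ht
  obtain ⟨a, ha⟩ := h.exists
  rw [← cdf1_eq_cdf] at ha
  exact ⟨a, ha.le⟩

/-- The quantile function is monotone on `(0,1)`, and outside `(0,1)` it takes the junk value `0`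
except possibly at `1`. -/
lemma measurable_qReal (ν : Measure ℝ) [IsProbabilityMeasure ν] : Measurable (qReal ν) := by
  refine measurable_of_restrict_of_restrict_compl (measurableSet_Ioo (a := (0 : ℝ)) (b := 1)) ?_ ?_
  · refine Monotone.measurable ?_
    rintro ⟨a, ha⟩ ⟨b, hb⟩ hab
    exact csInf_le_csInf (bddBelow_superlevel ν ha.1) (nonempty_superlevel ν hb.2)
      fun s (hs : b ≤ cdf1 ν s) => show a ≤ cdf1 ν s from le_trans hab hs
  · have h : (Ioo (0 : ℝ) 1)ᶜ.domRestrict (qReal ν)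
        = (Ioo (0 : ℝ) 1)ᶜ.domRestrict (({1} : Set ℝ).indicator fun _ => qReal ν 1) := by
      funext ⟨a, ha⟩
      simp only [Set.domRestrict_apply, Set.indicator_apply, mem_singleton_iff]
      split_ifs with h1
      · rw [h1]
      · rcases le_or_gt a 0 with h0 | h0
        · have : {s : ℝ | a ≤ cdf1 ν s} = univ :=
            eq_univ_of_forall fun s => h0.trans ENNReal.toReal_nonneg
          rw [qReal, this, Real.sInf_univ]
        · have h2 : 1 < a := by
            by_contra! h2
            exact ha ⟨h0, lt_of_le_of_ne h2 h1⟩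
          have : {s : ℝ | a ≤ cdf1 ν s} = ∅ := by
            refine eq_empty_of_forall_notMem fun s hs => ?_
            have h3 : cdf1 ν s ≤ 1 := by
              rw [cdf1_eq_cdf]
              exact ProbabilityTheory.cdf_le_one ν s
            exact absurd (h2.trans_le hs) (not_lt.2 h3)
          rw [qReal, this, Real.sInf_empty]
    rw [h]
    exact (measurable_const.indicator (measurableSet_singleton 1)).comp measurable_subtype_coe

/-- A set of reals all of whose initial segments are null is null. -/
lemma measure_null_of_inter_Iic (ν : Measure ℝ) (s : Set ℝ) (h : ∀ x ∈ s, ν (s ∩ Iic x) = 0) :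
    ν s = 0 := by
  refine measure_null_of_locally_null s fun x hx => ?_
  by_cases hmax : ∃ y ∈ s, x < y
  · obtain ⟨y, hy, hxy⟩ := hmax
    exact ⟨s ∩ Iic y, Filter.inter_mem self_mem_nhdsWithin
      (mem_nhdsWithin_of_mem_nhds (Iic_mem_nhds hxy)), h y hy⟩
  · push Not at hmax
    exact ⟨s ∩ Iic x, Filter.inter_mem self_mem_nhdsWithin
      (Filter.mem_of_superset self_mem_nhdsWithin hmax), h x hx⟩

/-- The generalized inverse is an almost sure left inverse of the cdf, for an arbitrary law, possibly
with atoms. -/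
lemma ae_qReal_cdf1 (ν : Measure ℝ) [IsProbabilityMeasure ν] :
    ∀ᵐ x ∂ν, qReal ν (cdf1 ν x) = x := by
  have hpos : ∀ᵐ x ∂ν, ¬ cdf1 ν x = 0 := by
    refine (measure_null_of_inter_Iic ν _ fun x hx => ?_ : ν {x | ¬¬ cdf1 ν x = 0} = 0)
    simp only [not_not, mem_ofPred_eq] at hx
    refine measure_mono_null inter_subset_right ?_
    exact (ENNReal.toReal_eq_zero_iff _).1 hx |>.resolve_right (measure_ne_top _ _)
  have hflat : ∀ᵐ x ∂ν, ∀ r : ℚ, ¬ ((r : ℝ) < x ∧ cdf1 ν x ≤ cdf1 ν r) := by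
    rw [ae_all_iff]
    intro r
    refine (measure_null_of_inter_Iic ν _ fun x hx => ?_ :
      ν {x | ¬¬ ((r : ℝ) < x ∧ cdf1 ν x ≤ cdf1 ν r)} = 0)
    simp only [not_not, mem_ofPred_eq] at hx ⊢
    refine measure_mono_null (t := Iic x \ Iic (r : ℝ))
      (fun y hy => ⟨hy.2, not_le.2 hy.1.1⟩) ?_
    rw [measure_sdiff (Iic_subset_Iic.2 hx.1.le) measurableSet_Iic.nullMeasurableSet
      (measure_ne_top _ _), tsub_eq_zero_iff_le]
    exact (ENNReal.toReal_le_toReal (measure_ne_top _ _) (measure_ne_top _ _)).1 hx.2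
  filter_upwards [hpos, hflat] with x h0 hx
  have h0' : 0 < cdf1 ν x := lt_of_le_of_ne ENNReal.toReal_nonneg (Ne.symm h0)
  refine le_antisymm (csInf_le (bddBelow_superlevel ν h0') (le_refl (cdf1 ν x))) ?_
  by_contra! hlt
  obtain ⟨s, hs, hsx⟩ := exists_lt_of_csInf_lt ⟨x, le_refl (cdf1 ν x)⟩ hlt
  obtain ⟨r, hsr, hrx⟩ := exists_rat_btwn hsx
  exact hx r ⟨hrx, le_trans hs (monotone_cdf1 ν hsr.le)⟩

lemma isProbabilityMeasure_marg (ν : Measure (Fin d → ℝ)) [IsProbabilityMeasure ν] (i : Fin d) :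
    IsProbabilityMeasure (marg ν i) :=
  Measure.isProbabilityMeasure_map (measurable_pi_apply i).aemeasurable

/-- A law on `ℝ^d` is determined by its marginals and its copula. -/
lemma joinCopula_copulaOf (ν : Measure (Fin d → ℝ)) [IsProbabilityMeasure ν] :
    joinCopula (marg ν) (copulaOf ν) = ν := by
  have hp := isProbabilityMeasure_marg ν
  have hc : Measurable fun (x : Fin d → ℝ) => fun i => cdf1 (marg ν i) (x i) :=
    measurable_pi_lambda _ fun i => (monotone_cdf1 (marg ν i)).measurable.comp (measurable_pi_apply i)
  have hq : Measurable fun (u : Fin d → ℝ) => fun i => qReal (marg ν i) (u i) :=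
    measurable_pi_lambda _ fun i => (measurable_qReal (marg ν i)).comp (measurable_pi_apply i)
  have hae : ∀ᵐ x ∂ν, ∀ i, qReal (marg ν i) (cdf1 (marg ν i) (x i)) = x i := by
    rw [ae_all_iff]
    intro i
    exact ae_of_ae_map (measurable_pi_apply i).aemeasurable (ae_qReal_cdf1 (marg ν i))
  rw [joinCopula, copulaOf, Measure.map_map hq hc]
  conv_rhs => rw [← Measure.map_id (μ := ν)]
  refine Measure.map_congr ?_
  filter_upwards [hae] with x hx
  funext i
  exact hx i

lemma measurable_perm (π : Equiv.Perm (Fin d)) :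
    Measurable fun (x : Fin d → ℝ) => fun i => x (π i) :=
  measurable_pi_lambda _ fun i => measurable_pi_apply (π i)

lemma symmetrize_apply (μ : Measure (Fin d → ℝ)) {T : Set (Fin d → ℝ)} (hT : MeasurableSet T) :
    symmetrize μ T = (d.factorial : ℝ≥0∞)⁻¹ *
      ∑ π : Equiv.Perm (Fin d), μ {x | (fun i => x (π i)) ∈ T} := by
  simp only [symmetrize, Measure.smul_apply, Measure.finsetSum_apply, smul_eq_mul]
  congr 1
  exact Finset.sum_congr rfl fun π _ => Measure.map_apply (measurable_perm π) hT

lemma symmetrize_apply_of_invariant (μ : Measure (Fin d → ℝ)) {T : Set (Fin d → ℝ)}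
    (hT : MeasurableSet T)
    (hinv : ∀ (π : Equiv.Perm (Fin d)) (x : Fin d → ℝ), (fun i => x (π i)) ∈ T ↔ x ∈ T) :
    symmetrize μ T = μ T := by
  rw [symmetrize_apply μ hT]
  simp only [hinv, ofPred_mem_eq, Finset.sum_const, Finset.card_univ, Fintype.card_perm,
    Fintype.card_fin, nsmul_eq_mul]
  rw [← mul_assoc, ENNReal.inv_mul_cancel (by exact_mod_cast d.factorial_ne_zero)
    (ENNReal.natCast_ne_top _), one_mul]

lemma isProbabilityMeasure_symmetrize (μ : Measure (Fin d → ℝ)) [IsProbabilityMeasure μ] :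
    IsProbabilityMeasure (symmetrize μ) :=
  ⟨by rw [symmetrize_apply_of_invariant μ MeasurableSet.univ (by simp), measure_univ]⟩

lemma marg_symmetrize (μ : Measure (Fin d → ℝ)) (i : Fin d) :
    marg (symmetrize μ) i =
      (d.factorial : ℝ≥0∞)⁻¹ • ∑ π : Equiv.Perm (Fin d), marg μ (π i) := by
  ext A hA
  have hA' : MeasurableSet ((fun x : Fin d → ℝ => x i) ⁻¹' A) := measurable_pi_apply i hA
  rw [marg, Measure.map_apply (measurable_pi_apply i) hA, symmetrize_apply μ hA']
  simp only [Measure.smul_apply, Measure.finsetSum_apply, smul_eq_mul]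
  congr 1
  refine Finset.sum_congr rfl fun π _ => ?_
  rw [marg, Measure.map_apply (measurable_pi_apply (π i)) hA]
  rfl

lemma measurableSet_monotone : MeasurableSet {x : Fin d → ℝ | Monotone x} :=
  isClosed_monotone.measurableSet

/-- The mass of a measurable set under a law of ordered vectors, in terms of the
symmetrization. -/
lemma apply_eq_symmetrize (μ : Measure (Fin d → ℝ)) [IsProbabilityMeasure μ]
    (hμ : μ {x | Monotone x} = 1) {A : Set (Fin d → ℝ)} (hA : MeasurableSet A) :
    μ A = symmetrize μ
      (⋃ π : Equiv.Perm (Fin d), {x | (fun i => x (π i)) ∈ A ∩ {x | Monotone x}}) := by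
  have hmono : ∀ᵐ x ∂μ, Monotone x := (mem_ae_iff_prob_eq_one measurableSet_monotone).2 hμ
  rw [symmetrize_apply_of_invariant]
  · refine measure_congr ?_
    filter_upwards [hmono] with x hx
    refine propext ⟨fun h => mem_iUnion.2 ⟨1, h, hx⟩, fun h => ?_⟩
    obtain ⟨π, h1, h2⟩ := mem_iUnion.1 h
    -- `x` and `x ∘ π` are both monotone, hence equal.
    have h3 : x ∘ π = x ∘ (1 : Equiv.Perm (Fin d)) := Tuple.unique_monotone h2 hx
    have h4 : (fun i => x (π i)) = x := h3
    rw [h4] at h1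
    exact h1
  · exact MeasurableSet.iUnion fun π => measurable_perm π (hA.inter measurableSet_monotone)
  · intro σ x
    simp only [mem_iUnion]
    constructor
    · rintro ⟨π, h⟩
      exact ⟨σ * π, h⟩
    · rintro ⟨π, h⟩
      refine ⟨σ⁻¹ * π, ?_⟩
      simpa using h

lemma eq_of_symmetrize_eq {μ₁ μ₂ : Measure (Fin d → ℝ)} [IsProbabilityMeasure μ₁]
    [IsProbabilityMeasure μ₂] (h₁ : μ₁ {x | Monotone x} = 1) (h₂ : μ₂ {x | Monotone x} = 1)
    (h : symmetrize μ₁ = symmetrize μ₂) : μ₁ = μ₂ := by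
  ext A hA
  rw [apply_eq_symmetrize μ₁ h₁ hA, apply_eq_symmetrize μ₂ h₂ hA, h]

/-- Lemma `lem:one_to_one`.  Let `F = (F_1, …, F_d)` be a `d`-tuple of
continuous cdfs on `ℝ` with `F_{i-1} ≥ F_i` pointwise.  The symmetrizing operator `S_F` is a
bijection from `C^OS(F)` onto its image `C^sym(F) = S_F(C^OS(F))`, i.e. it is injective on
`C^OS(F)`. -/
theorem stmt_7 {d : ℕ} [NeZero d] (F : Fin d → Measure ℝ) (hF : IsMargOS F) :
    Set.InjOn (SF F) (copulaOS F) := by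
  rintro _ ⟨μ₁, ⟨hp₁, hm₁, hF₁⟩, rfl⟩ _ ⟨μ₂, ⟨hp₂, hm₂, hF₂⟩, rfl⟩ h
  have e₁ : marg μ₁ = F := funext hF₁
  have e₂ : marg μ₂ = F := funext hF₂
  have hj₁ : joinCopula F (copulaOf μ₁) = μ₁ := by rw [← e₁]; exact joinCopula_copulaOf μ₁
  have hj₂ : joinCopula F (copulaOf μ₂) = μ₂ := by rw [← e₂]; exact joinCopula_copulaOf μ₂
  simp only [SF, hj₁, hj₂] at h
  have hmarg : marg (symmetrize μ₁) = marg (symmetrize μ₂) := by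
    funext i
    rw [marg_symmetrize, marg_symmetrize, e₁, e₂]
  have := isProbabilityMeasure_symmetrize μ₁
  have := isProbabilityMeasure_symmetrize μ₂
  have hsym : symmetrize μ₁ = symmetrize μ₂ := by
    rw [← joinCopula_copulaOf (symmetrize μ₁), ← joinCopula_copulaOf (symmetrize μ₂), h, hmarg]
  rw [eq_of_symmetrize_eq hm₁ hm₂ hsym]

end MaxEntOS
end
end
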